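/- arXiv:1709.07032 — 2 statements merged into one kernel-verified Lean document; each statement's English description precedes it below -/
import Mathlib

section
/- For every customer demand λ : N × N × {1,…,T} → ℕ, the offline optimal rebalancing problem admits a feasible solution; that is, there exist passenger flows x^p, rebalancing flows x^r, and initial vehicle placements s (all ℕ-valued) satisfying the demand-satisfaction constraint, the vehicle flow-conservation constraint, and the constraint that initial vehicles are only inserted at the first time interval. -/
/-!
Offline optimal rebalancing problem (time-expanded network).
Time is modeled by natural numbers restricted to `Finset.Icc 1 T`.
Inflow terms whose departure time `t - τ j i` would be `< 1` are taken to be `0`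
(since `τ j i ≥ 1`, this is exactly when `¬ (τ j i < t)`).
The vehicle-conservation equation `Σ out − Σ in = s i t` is stated equivalently in ℕ
as `Σ out = s i t + Σ in`.
-/

/-- Feasibility for the offline optimal rebalancing problem:
(i) demand satisfaction, (ii) vehicle flow conservation,
(iii) initial vehicles only at the first time interval. -/
def IsFeasible {N : Type*} [Fintype N] (T : ℕ) (τ : N → N → ℕ)
    (lam : N → N → ℕ → ℕ) (xp xr : N → N → ℕ → ℕ) (s : N → ℕ → ℕ) : Prop :=
  (∀ i j t, t ∈ Finset.Icc 1 T → xp i j t = lam i j t) ∧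
  (∀ i t, t ∈ Finset.Icc 1 T →
    (∑ j, (xp i j t + xr i j t)) =
      s i t + ∑ j, (if τ j i < t then xp j i (t - τ j i) + xr j i (t - τ j i) else 0)) ∧
  (∀ i t, 1 < t → s i t = 0)

/-!
Station at each region one vehicle for every customer who ever departs from it. Each vehicle serves
exactly one customer and idles before and after the trip, so the vehicles idling at `i` after the
departures of time `t` are those still waiting for a customer of `i` and those that have already
delivered one to `i`.
-/

/-- The flow in which `w i t` vehicles idle at region `i` at time `t`, encoded as trips from `i` to
`i`, and no vehicle changes its region. -/
def idlingFlow {N M : Type*} [DecidableEq N] [Zero M] (w : N → ℕ → M) (i j : N) (t : ℕ) : M :=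
  if i = j then w i t else 0

section Flow

variable {N M : Type*} [Fintype N] [AddCommMonoid M]

/-- The amount of the flow `x` that leaves region `i` at time `t`. -/
def outflow (x : N → N → ℕ → M) (i : N) (t : ℕ) : M :=
  ∑ j, x i j t

/-- The amount of the flow `x` that reaches region `i` at time `t` under the travel times `τ`.
Departures before time `1` are discarded, so that the truncated subtraction `t - τ j i` is exact. -/
def inflow (τ : N → N → ℕ) (x : N → N → ℕ → M) (i : N) (t : ℕ) : M :=
  ∑ j, if τ j i < t then x j i (t - τ j i) else 0

theorem outflow_add (x y : N → N → ℕ → M) (i : N) (t : ℕ) :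
    outflow (x + y) i t = outflow x i t + outflow y i t :=
  Finset.sum_add_distrib

theorem inflow_add (τ : N → N → ℕ) (x y : N → N → ℕ → M) (i : N) (t : ℕ) :
    inflow τ (x + y) i t = inflow τ x i t + inflow τ y i t := by
  simp only [inflow, ← Finset.sum_add_distrib, ite_add_ite, add_zero, Pi.add_apply]

theorem outflow_idlingFlow [DecidableEq N] (w : N → ℕ → M) (i : N) (t : ℕ) :
    outflow (idlingFlow w) i t = w i t :=
  Fintype.sum_ite_eq i fun _ ↦ w i t

theorem inflow_idlingFlow [DecidableEq N] (τ : N → N → ℕ) (w : N → ℕ → M) (i : N) (t : ℕ) :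
    inflow τ (idlingFlow w) i t = if τ i i < t then w i (t - τ i i) else 0 := by
  refine (Fintype.sum_eq_single i fun j hj ↦ ?_).trans ?_
  · simp only [idlingFlow, if_neg hj, ite_self]
  · simp only [idlingFlow, if_true]

/-- The number of vehicles idling at region `i` after the departures of time `t`, when each vehicle
serves one unit of the demand `x` up to the horizon `T`: the departures from `i` still to come and
the arrivals at `i` so far. -/
def idleVehicles (T : ℕ) (τ : N → N → ℕ) (x : N → N → ℕ → M) (i : N) (t : ℕ) : M :=
  ∑ u ∈ Finset.Ioc t T, outflow x i u + ∑ u ∈ Finset.Ioc 0 t, inflow τ x i u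

theorem outflow_add_idleVehicles_succ {t T : ℕ} (ht : t < T) (τ : N → N → ℕ)
    (x : N → N → ℕ → M) (i : N) :
    outflow x i (t + 1) + idleVehicles T τ x i (t + 1) =
      inflow τ x i (t + 1) + idleVehicles T τ x i t := by
  have departures : ∑ u ∈ Finset.Ioc t T, outflow x i u =
      outflow x i (t + 1) + ∑ u ∈ Finset.Ioc (t + 1) T, outflow x i u := by
    rw [← Finset.insert_Ioc_add_one_left_eq_Ioc ht, Finset.sum_insert Finset.left_notMem_Ioc]
  have arrivals : ∑ u ∈ Finset.Ioc 0 (t + 1), inflow τ x i u =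
      ∑ u ∈ Finset.Ioc 0 t, inflow τ x i u + inflow τ x i (t + 1) :=
    Finset.sum_Ioc_succ_top t.zero_le _
  rw [idleVehicles, idleVehicles, departures, arrivals]
  ac_rfl

/-- The initial vehicles that station at each region, at time `1`, one vehicle for each unit of
the demand `x` departing from it up to the horizon `T`. -/
def initialVehicles (T : ℕ) (x : N → N → ℕ → M) (i : N) : ℕ → M :=
  Pi.single 1 (∑ u ∈ Finset.Ioc 0 T, outflow x i u)

theorem initialVehicles_succ_add_inflow_idlingFlow [DecidableEq N] {τ : N → N → ℕ} {i : N}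
    (hτi : τ i i = 1) (T : ℕ) (x : N → N → ℕ → M) (t : ℕ) :
    initialVehicles T x i (t + 1) + inflow τ (idlingFlow (idleVehicles T τ x)) i (t + 1) =
      idleVehicles T τ x i t := by
  rw [inflow_idlingFlow, hτi]
  cases t <;> simp [initialVehicles, idleVehicles]

end Flow

theorem isFeasible_idlingFlow {N : Type*} [Fintype N] [DecidableEq N] (T : ℕ) {τ : N → N → ℕ}
    (hτdiag : ∀ i, τ i i = 1) (lam : N → N → ℕ → ℕ) :
    IsFeasible T τ lam lam (idlingFlow (idleVehicles T τ lam)) (initialVehicles T lam) := by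
  refine ⟨fun _ _ _ _ ↦ rfl, fun i t ht ↦ ?_, fun i t ht ↦ Pi.single_eq_of_ne ht.ne' _⟩
  obtain ⟨t, rfl⟩ := Nat.exists_eq_add_of_le' (Finset.mem_Icc.mp ht).1
  have t_lt : t < T := (Finset.mem_Icc.mp ht).2
  set idle := idleVehicles T τ lam with idle_def
  calc
    outflow (lam + idlingFlow idle) i (t + 1)
      = outflow lam i (t + 1) + idle i (t + 1) := by rw [outflow_add, outflow_idlingFlow]
    _ = inflow τ lam i (t + 1) + idle i t := outflow_add_idleVehicles_succ t_lt τ lam i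
    _ = inflow τ lam i (t + 1) +
          (initialVehicles T lam i (t + 1) + inflow τ (idlingFlow idle) i (t + 1)) := by
      rw [idle_def, initialVehicles_succ_add_inflow_idlingFlow (hτdiag i)]
    _ = initialVehicles T lam i (t + 1) + inflow τ (lam + idlingFlow idle) i (t + 1) := by
      rw [inflow_add, add_left_comm]

/-- **Feasibility of the offline optimal rebalancing problem.**
For every customer demand `lam`, there exist passenger flows, rebalancing flows, and
initial vehicle placements forming a feasible solution. -/
theorem offline_rebalancing_feasible
    {N : Type*} [Fintype N] [Nonempty N] (T : ℕ) (τ : N → N → ℕ)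
    (hτ : ∀ i j, 1 ≤ τ i j) (hτdiag : ∀ i, τ i i = 1)
    (lam : N → N → ℕ → ℕ) :
    ∃ (xp xr : N → N → ℕ → ℕ) (s : N → ℕ → ℕ),
      IsFeasible T τ lam xp xr s := by
  classical
  exact ⟨lam, _, _, isFeasible_idlingFlow T hτdiag lam⟩
end

section
/- Every extreme point of the LP relaxation polytope of the offline optimal rebalancing problem is integer-valued: if (x^p, x^r, s), with real nonnegative entries, is an extreme point of the convex set of real-valued solutions satisfying the demand-satisfaction constraint, the vehicle flow-conservation constraint, and the constraint that initial vehicles are only inserted at the first time interval, then every coordinate of x^p, x^r, and s is a natural number. -/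
/-- The LP-relaxation feasible set of the offline optimal rebalancing problem,
viewed inside the real vector space of triples `(x^p, x^r, s)`.
Coordinates are indexed by `N × N × {1,…,T}` (resp. `N × {1,…,T}`); since we use
total functions on `ℕ` for time, all coordinates outside `Finset.Icc 1 T` are
constrained to vanish, so the set is (affinely isomorphic to) the finite-dimensional
polytope of the paper. The constraints are: nonnegativity, demand satisfaction
`x^p i j t = λ i j t`, vehicle flow conservation
`Σ_j out − Σ_j in = s i t` (inflow terms whose departure time would be `< 1` are `0`),
and `s i t = 0` for `t > 1`. -/
def LPFeasibleSet {N : Type*} [Fintype N] (T : ℕ) (τ : N → N → ℕ)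
    (lam : N → N → ℕ → ℕ) :
    Set ((N → N → ℕ → ℝ) × (N → N → ℕ → ℝ) × (N → ℕ → ℝ)) :=
  {p | (∀ i j t, 0 ≤ p.1 i j t) ∧ (∀ i j t, 0 ≤ p.2.1 i j t) ∧ (∀ i t, 0 ≤ p.2.2 i t) ∧
    (∀ i j t, t ∉ Finset.Icc 1 T → p.1 i j t = 0 ∧ p.2.1 i j t = 0) ∧
    (∀ i t, t ∉ Finset.Icc 1 T → p.2.2 i t = 0) ∧
    (∀ i j t, t ∈ Finset.Icc 1 T → p.1 i j t = (lam i j t : ℝ)) ∧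
    (∀ i t, t ∈ Finset.Icc 1 T →
      (∑ j, (p.1 i j t + p.2.1 i j t)) -
        (∑ j, (if τ j i < t then p.1 j i (t - τ j i) + p.2.1 j i (t - τ j i) else 0))
        = p.2.2 i t) ∧
    (∀ i t, 1 < t → p.2.2 i t = 0)}

/-!
Flow conservation on the time-expanded network, whose vertices are the pairs (region, time) together
with one further vertex out of which all initial vehicles come, is a system `A x = b` with `b`
integral and `A` consisting of rows of the incidence matrix of a directed graph. Such a matrix is
totally unimodular: in a square submatrix, either some column has at most one nonzero entry and one
expands along it, or the rows sum to zero.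

At an extreme point of `{x ≥ 0 | A x = b}` the columns of `A` on the support of `x` are linearly
independent, since one could move in both directions along a kernel vector supported there. Hence
they contain an invertible square submatrix of full width, of determinant `±1`, and Cramer's rule
shows that `x` is integral.
-/

open Matrix

section ExtremePoints

variable {𝕜 E F : Type*} [AddCommGroup E] [AddCommGroup F]

lemma extremePoints_image_subset [Ring 𝕜] [PartialOrder 𝕜] [IsOrderedRing 𝕜] [Module 𝕜 E]
    [Module 𝕜 F] {f : E →ᵃ[𝕜] F} (hf : Function.Injective f) {s : Set E} :
    (f '' s).extremePoints 𝕜 ⊆ f '' s.extremePoints 𝕜 := by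
  rintro _ ⟨⟨x, hx, rfl⟩, hext⟩
  refine ⟨x, ⟨hx, fun y hy z hz hxyz => hf (hext ⟨y, hy, rfl⟩ ⟨z, hz, rfl⟩ ?_)⟩, rfl⟩
  rw [← image_openSegment]
  exact Set.mem_image_of_mem f hxyz

lemma eq_zero_of_add_mem_of_sub_mem_of_mem_extremePoints [Field 𝕜] [LinearOrder 𝕜]
    [IsStrictOrderedRing 𝕜] [Module 𝕜 E] {s : Set E} {x d : E}
    (hx : x ∈ s.extremePoints 𝕜) (hadd : x + d ∈ s) (hsub : x - d ∈ s) : d = 0 := by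
  have hmid : x ∈ openSegment 𝕜 (x + d) (x - d) :=
    ⟨2⁻¹, 2⁻¹, by positivity, by positivity, by norm_num, by module⟩
  simpa using hx.2 hadd hsub hmid

end ExtremePoints

section TotallyUnimodular

lemma det_mem_subring {n R : Type*} [Fintype n] [DecidableEq n] [CommRing R] (S : Subring R)
    {B : Matrix n n R} (hB : ∀ i j, B i j ∈ S) : B.det ∈ S := by
  rw [det_apply]
  exact sum_mem fun σ _ => zsmul_mem (prod_mem fun i _ => hB _ _) _

lemma det_eq_zero_of_sum_col_eq_zero {n R : Type*} [Fintype n] [DecidableEq n] [Nonempty n]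
    [CommRing R] {A : Matrix n n R} (h : ∀ j, ∑ i, A i j = 0) : A.det = 0 := by
  have hker : Aᵀ *ᵥ 1 = 0 := funext fun j => by simpa [mulVec, dotProduct] using h j
  rw [← det_transpose]
  exact det_eq_zero_of_mulVec_eq_zero_of_mem_nonZeroDivisors hker (i := Classical.arbitrary n)
    (one_mem _)

lemma det_mem_range_cast_of_col_eq_zero {R : Type*} [CommRing R] {k : ℕ}
    {A : Matrix (Fin (k + 1)) (Fin (k + 1)) R} {i₀ j : Fin (k + 1)} (hcol : ∀ i ≠ i₀, A i j = 0)
    (hentry : A i₀ j ∈ Set.range (SignType.cast : SignType → R))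
    (hminor : (A.submatrix i₀.succAbove j.succAbove).det ∈
      Set.range (SignType.cast : SignType → R)) :
    A.det ∈ Set.range (SignType.cast : SignType → R) := by
  obtain ⟨s, hs⟩ := hentry
  obtain ⟨t, ht⟩ := hminor
  refine ⟨(-1) ^ (i₀ + j : ℕ) * s * t, ?_⟩
  rw [det_succ_column A j, Finset.sum_eq_single i₀ (fun i _ hi => by simp [hcol i hi]) (by simp)]
  simp [hs, ht]

variable {m n K : Type*} [Field K] {A : Matrix m n K}

lemma span_range_row_eq_top_of_linearIndependent_col [Finite n] (hA : LinearIndependent K A.col) :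
    Submodule.span K (Set.range A.row) = ⊤ := by
  classical
  cases nonempty_fintype n
  by_contra hne
  obtain ⟨f, hf, hker⟩ := Submodule.exists_le_ker_of_lt_top _ (lt_top_iff_ne_top.mpr hne)
  obtain ⟨y, rfl⟩ := (dotProductEquiv K n).surjective f
  have hAy : A *ᵥ y = 0 := funext fun i =>
    (dotProduct_comm _ _).trans (hker (Submodule.subset_span ⟨i, rfl⟩))
  have hy : y = 0 := mulVec_injective_iff.mpr hA (hAy.trans (mulVec_zero A).symm)
  exact hf (by rw [hy, map_zero])

variable [Fintype n]

lemma exists_isUnit_submatrix_of_linearIndependent_col [DecidableEq n]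
    (hA : LinearIndependent K A.col) : ∃ r : n → m, IsUnit (A.submatrix r id) := by
  obtain ⟨κ, a, -, hspan, hli⟩ := exists_linearIndependent' K A.row
  rw [span_range_row_eq_top_of_linearIndependent_col hA] at hspan
  let e : n ≃ κ := (Pi.basisFun K n).indexEquiv (Module.Basis.mk hli hspan.ge)
  exact ⟨a ∘ e, linearIndependent_rows_iff_isUnit.mp (hli.comp e e.injective)⟩

lemma mem_subring_of_isUnit_of_mulVec_mem [DecidableEq n] (S : Subring K) {B : Matrix n n K}
    (hB : B.IsTotallyUnimodular) (hunit : IsUnit B) {x : n → K} (hx : ∀ i, (B *ᵥ x) i ∈ S)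
    (j : n) : x j ∈ S := by
  have hcramer : B.cramer (B *ᵥ x) = B.det • x := by
    apply mulVec_injective_iff_isUnit.mpr hunit
    rw [mulVec_cramer, mulVec_smul]
  have hsign : ∀ i k, B i k ∈ S := fun i k => by
    obtain ⟨s, hs⟩ := hB.apply i k
    cases s <;> simp [← hs]
  have hmem : B.det * x j ∈ S := by
    rw [← smul_eq_mul, ← Pi.smul_apply, ← hcramer, cramer_apply]
    refine det_mem_subring S fun i k => ?_
    rw [updateCol_apply]
    split_ifs
    exacts [hx i, hsign i k]
  obtain ⟨s, hs⟩ := (isTotallyUnimodular_iff_fintype B).mp hB n id id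
  rw [submatrix_id_id] at hs
  have hdet_ne : B.det ≠ 0 := (B.isUnit_iff_isUnit_det.mp hunit).ne_zero
  have hdet : B.det = 1 ∨ B.det = -1 := by
    cases s <;> simp_all
  rcases hdet with h | h <;> simpa [h] using hmem

lemma mem_subring_of_mulVec_mem (S : Subring K) (hA : A.IsTotallyUnimodular)
    (hcol : LinearIndependent K A.col) {x : n → K} (hx : ∀ i, (A *ᵥ x) i ∈ S) (j : n) :
    x j ∈ S := by
  classical
  obtain ⟨r, hr⟩ := exists_isUnit_submatrix_of_linearIndependent_col hcol
  exact mem_subring_of_isUnit_of_mulVec_mem S (hA.submatrix r id) hr (fun i => hx (r i)) j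

end TotallyUnimodular

section StandardForm

lemma mulVec_extend_zero {m n ι R : Type*} [Fintype n] [Fintype ι] [NonUnitalNonAssocSemiring R]
    (A : Matrix m n R) {f : ι → n} (hf : Function.Injective f) (y : ι → R) :
    A *ᵥ Function.extend f y 0 = A.submatrix id f *ᵥ y := by
  funext i
  refine (Fintype.sum_of_injective f hf _ _ (fun j hj => ?_) fun k => ?_).symm
  · rw [Function.extend_apply' _ _ _ hj, Pi.zero_apply, mul_zero]
  · simp only [hf.extend_apply, submatrix_apply, id]

/-- The feasible set `{x ≥ 0 | A x = b}` of a linear program in standard form. -/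
def standardPolyhedron {m n R : Type*} [Fintype n] [Semiring R] [PartialOrder R]
    (A : Matrix m n R) (b : m → R) : Set (n → R) :=
  {x | 0 ≤ x ∧ A *ᵥ x = b}

variable {m n K : Type*} [Fintype n] [Field K] [LinearOrder K] [IsStrictOrderedRing K]
  {A : Matrix m n K} {b : m → K} {x : n → K}

lemma exists_pos_forall_mul_abs_le {ι : Type*} [Finite ι] {x d : ι → K} (hx : 0 ≤ x)
    (hd : ∀ j, x j = 0 → d j = 0) : ∃ ε : K, 0 < ε ∧ ∀ j, ε * |d j| ≤ x j := by
  have hbound : ∀ j, ∃ δ : K, 0 < δ ∧ ∀ ε ≤ δ, ε * |d j| ≤ x j := fun j => by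
    rcases eq_or_ne (d j) 0 with hdj | hdj
    · exact ⟨1, one_pos, fun ε _ => by simpa [hdj] using hx j⟩
    · have hxj : 0 < x j := (hx j).lt_of_ne fun h => hdj (hd j h.symm)
      exact ⟨x j / |d j|, by positivity, fun ε => (le_div_iff₀ (abs_pos.mpr hdj)).mp⟩
  choose δ hδ hle using hbound
  obtain ⟨ε, hε, hεδ⟩ := Pi.exists_forall_pos_add_lt hδ
  exact ⟨ε, hε, fun j => hle j ε (by simpa using (hεδ j).le)⟩

lemma eq_zero_of_mulVec_eq_zero_of_mem_extremePoints
    (hx : x ∈ (standardPolyhedron A b).extremePoints K) {d : n → K} (hAd : A *ᵥ d = 0)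
    (hsupp : ∀ j, x j = 0 → d j = 0) : d = 0 := by
  obtain ⟨hnonneg, hAx⟩ := hx.1
  obtain ⟨ε, hε, hle⟩ := exists_pos_forall_mul_abs_le hnonneg hsupp
  have habs : ∀ j, |(ε • d) j| ≤ x j := fun j => by
    simpa [abs_mul, abs_of_pos hε] using hle j
  have hstep : ε • d = 0 := by
    refine eq_zero_of_add_mem_of_sub_mem_of_mem_extremePoints hx ⟨fun j => ?_, ?_⟩ ⟨fun j => ?_, ?_⟩
    · exact neg_le_iff_add_nonneg'.mp (abs_le.mp (habs j)).1
    · rw [mulVec_add, mulVec_smul, hAd, smul_zero, add_zero, hAx]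
    · exact sub_nonneg.mpr (abs_le.mp (habs j)).2
    · rw [mulVec_sub, mulVec_smul, hAd, smul_zero, sub_zero, hAx]
  exact (smul_eq_zero.mp hstep).resolve_left hε.ne'

lemma linearIndependent_col_support_of_mem_extremePoints
    (hx : x ∈ (standardPolyhedron A b).extremePoints K) :
    LinearIndependent K (A.submatrix id ((↑) : Function.support x → n)).col := by
  classical
  rw [← mulVec_injective_iff, ← coe_mulVecLin, injective_iff_map_eq_zero]
  intro y hy
  have hzero : Function.extend Subtype.val y (0 : n → K) = 0 := by
    refine eq_zero_of_mulVec_eq_zero_of_mem_extremePoints hx ?_ fun j hj => ?_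
    · rw [mulVec_extend_zero _ Subtype.val_injective]
      exact hy
    · exact Function.extend_apply' _ _ _ fun ⟨i, hi⟩ => i.2 (hi ▸ hj)
  funext i
  rw [← Subtype.val_injective.extend_apply y (0 : n → K) i, hzero, Pi.zero_apply, Pi.zero_apply]

/-- One direction of the Hoffman–Kruskal theorem, with a subring in place of the integers. -/
theorem mem_subring_of_mem_extremePoints_standardPolyhedron (S : Subring K)
    (hA : A.IsTotallyUnimodular) (hb : ∀ i, b i ∈ S)
    (hx : x ∈ (standardPolyhedron A b).extremePoints K) (j : n) : x j ∈ S := by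
  classical
  by_cases hj : x j = 0
  · exact hj ▸ S.zero_mem
  have hrestrict : A.submatrix id ((↑) : Function.support x → n) *ᵥ (fun i => x i) = b := by
    rw [← mulVec_extend_zero _ Subtype.val_injective, ← hx.1.2]
    congr 1
    funext i
    by_cases hi : x i = 0
    · rw [hi, Function.extend_apply' _ _ _ fun ⟨i', hi'⟩ => i'.2 (hi' ▸ hi), Pi.zero_apply]
    · exact Subtype.val_injective.extend_apply (fun i => x i) (0 : n → K)
        (⟨i, hi⟩ : Function.support x)
  exact mem_subring_of_mulVec_mem S (hA.submatrix id _)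
    (linearIndependent_col_support_of_mem_extremePoints hx)
    (fun i => by rw [hrestrict]; exact hb i) (⟨j, hj⟩ : Function.support x)

end StandardForm

section Incidence

variable {V E : Type*} [DecidableEq V] (R : Type*) [Ring R]

/-- The vertex-arc incidence matrix of the directed multigraph whose arc `e` runs from `src e` to
`tgt e`. The column of a loop is zero. -/
def incidenceMatrix (src tgt : E → V) : Matrix V E R :=
  .of fun v e => (if src e = v then 1 else 0) - (if tgt e = v then 1 else 0)

variable {R} {src tgt : E → V}

lemma incidenceMatrix_mulVec [Fintype E] (x : E → R) (v : V) :
    (incidenceMatrix R src tgt *ᵥ x) v =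
      (∑ e, if src e = v then x e else 0) - ∑ e, if tgt e = v then x e else 0 := by
  simp [incidenceMatrix, mulVec, dotProduct, sub_mul, Finset.sum_sub_distrib]

lemma eq_src_or_eq_tgt_of_incidenceMatrix_ne_zero {v : V} {e : E}
    (h : incidenceMatrix R src tgt v e ≠ 0) : v = src e ∨ v = tgt e := by
  contrapose! h
  simp [incidenceMatrix, h.1.symm, h.2.symm]

lemma incidenceMatrix_apply_mem_range_cast (v : V) (e : E) :
    incidenceMatrix R src tgt v e ∈ Set.range (SignType.cast : SignType → R) := by
  by_cases hs : src e = v <;> by_cases ht : tgt e = v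
  · exact ⟨0, by simp [incidenceMatrix, hs, ht]⟩
  · exact ⟨1, by simp [incidenceMatrix, hs, ht]⟩
  · exact ⟨-1, by simp [incidenceMatrix, hs, ht]⟩
  · exact ⟨0, by simp [incidenceMatrix, hs, ht]⟩

lemma sum_incidenceMatrix_eq_zero {ι : Type*} [Fintype ι] {f : ι → V} (hf : Function.Injective f)
    {e : E} {a b : ι} (hab : a ≠ b) (ha : incidenceMatrix R src tgt (f a) e ≠ 0)
    (hb : incidenceMatrix R src tgt (f b) e ≠ 0) :
    ∑ i, incidenceMatrix R src tgt (f i) e = 0 := by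
  classical
  have hne : f a ≠ f b := hf.ne hab
  have hends : ∃ c d, src e = f c ∧ tgt e = f d := by
    have := eq_src_or_eq_tgt_of_incidenceMatrix_ne_zero ha
    have := eq_src_or_eq_tgt_of_incidenceMatrix_ne_zero hb
    grind
  obtain ⟨c, d, hc, hd⟩ := hends
  simp [incidenceMatrix, hc, hd, hf.eq_iff]

theorem isTotallyUnimodular_incidenceMatrix {R : Type*} [CommRing R] :
    (incidenceMatrix R src tgt).IsTotallyUnimodular := by
  intro k
  induction k with
  | zero => exact fun f g _ _ => ⟨1, by simp⟩
  | succ k ih =>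
    intro f g hf hg
    by_cases hsingle : ∃ j i₀, ∀ i ≠ i₀, incidenceMatrix R src tgt (f i) (g j) = 0
    · obtain ⟨j, i₀, hcol⟩ := hsingle
      exact det_mem_range_cast_of_col_eq_zero hcol (incidenceMatrix_apply_mem_range_cast _ _)
        (ih _ _ (hf.comp Fin.succAbove_right_injective) (hg.comp Fin.succAbove_right_injective))
    · -- Otherwise both ends of every arc are among the chosen vertices, so the rows sum to zero.
      push Not at hsingle
      refine ⟨0, SignType.coe_zero.trans (det_eq_zero_of_sum_col_eq_zero fun j => ?_).symm⟩
      obtain ⟨a, -, ha⟩ := hsingle j 0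
      obtain ⟨b, hba, hb⟩ := hsingle j a
      exact sum_incidenceMatrix_eq_zero hf hba hb ha

end Incidence

lemma sum_attach_ite_eq {α M : Type*} [DecidableEq α] [AddCommMonoid M] (s : Finset α)
    (f : s → M) (a : α) :
    (∑ u ∈ s.attach, if (u : α) = a then f u else 0) = if h : a ∈ s then f ⟨a, h⟩ else 0 := by
  split_ifs with h
  · rw [Finset.sum_eq_single_of_mem ⟨a, h⟩ (Finset.mem_attach _ _) fun u _ hu =>
      if_neg (Subtype.coe_ne_coe.mpr hu), if_pos rfl]
  · exact Finset.sum_eq_zero fun u _ => if_neg fun hu : (u : α) = a => h (hu ▸ u.2)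

section Rebalancing

variable {N : Type*} {T : ℕ} {τ : N → N → ℕ} {lam : N → N → ℕ → ℕ}

/-- The arcs of the time-expanded network: a rebalancing trip `(i, j, t)` leaving `i` for `j` at
time `t`, or the initial insertion `(i, t)` of vehicles at region `i`, where `t = 1` (and there is
none if the horizon is empty). -/
abbrev NetworkArc (N : Type*) (T : ℕ) : Type _ :=
  (N × N × Finset.Icc 1 T) ⊕ (N × Finset.Icc 1 (min 1 T))

/-- The tail of an arc of the time-expanded network, whose vertices are the pairs of a region and
a time and one further vertex `none` out of which all insertions come. -/
def arcSource : NetworkArc N T → Option (N × ℕ)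
  | .inl (i, _, t) => some (i, t)
  | .inr _ => none

/-- The head of an arc of the time-expanded network; trips may arrive after the horizon `T`. -/
def arcTarget (τ : N → N → ℕ) : NetworkArc N T → Option (N × ℕ)
  | .inl (i, j, t) => some (j, t + τ i j)
  | .inr (i, t) => some (i, t)

/-- The rebalancing flow `x^r` carried by the trip arcs of the network, extended by zero outside
the horizon. -/
def rebalancingFlow : (NetworkArc N T → ℝ) →ₗ[ℝ] N → N → ℕ → ℝ :=
  .pi fun i => .pi fun j => .pi fun t =>
    if h : t ∈ Finset.Icc 1 T then .proj (.inl (i, j, ⟨t, h⟩)) else 0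

/-- The insertions `s` carried by the insertion arcs of the network, extended by zero. -/
def initialInsertion : (NetworkArc N T → ℝ) →ₗ[ℝ] N → ℕ → ℝ :=
  .pi fun i => .pi fun t =>
    if h : t ∈ Finset.Icc 1 (min 1 T) then .proj (.inr (i, ⟨t, h⟩)) else 0

lemma rebalancingFlow_apply (z : NetworkArc N T → ℝ) (i j : N) (t : ℕ) :
    rebalancingFlow z i j t =
      if h : t ∈ Finset.Icc 1 T then z (.inl (i, j, ⟨t, h⟩)) else 0 := by
  simp only [rebalancingFlow, LinearMap.pi_apply]
  split_ifs <;> rfl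

lemma initialInsertion_apply (z : NetworkArc N T → ℝ) (i : N) (t : ℕ) :
    initialInsertion z i t =
      if h : t ∈ Finset.Icc 1 (min 1 T) then z (.inr (i, ⟨t, h⟩)) else 0 := by
  simp only [initialInsertion, LinearMap.pi_apply]
  split_ifs <;> rfl

/-- The trip rates `x^p` prescribed by the demand, which vanish outside the horizon. -/
def customerFlow (T : ℕ) (lam : N → N → ℕ → ℕ) (i j : N) (t : ℕ) : ℝ :=
  if t ∈ Finset.Icc 1 T then lam i j t else 0

lemma customerFlow_eq_natCast (i j : N) (t : ℕ) : ∃ n : ℕ, customerFlow T lam i j t = n := by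
  unfold customerFlow
  split_ifs
  exacts [⟨_, rfl⟩, ⟨0, Nat.cast_zero.symm⟩]

/-- The triple `(x^p, x^r, s)` belonging to a flow on the time-expanded network. -/
def networkEmbedding (T : ℕ) (lam : N → N → ℕ → ℕ) : (NetworkArc N T → ℝ) →ᵃ[ℝ]
    (N → N → ℕ → ℝ) × (N → N → ℕ → ℝ) × (N → ℕ → ℝ) :=
  (AffineMap.const ℝ _ (customerFlow T lam)).prod
    (rebalancingFlow.prod initialInsertion).toAffineMap

lemma networkEmbedding_apply (z : NetworkArc N T → ℝ) :
    networkEmbedding T lam z = (customerFlow T lam, rebalancingFlow z, initialInsertion z) :=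
  rfl

lemma networkEmbedding_injective : Function.Injective (networkEmbedding (N := N) T lam) := by
  intro z w h
  obtain ⟨-, hr, hs⟩ : _ ∧ rebalancingFlow z = rebalancingFlow w ∧
      initialInsertion z = initialInsertion w := by
    simpa only [networkEmbedding_apply, Prod.mk.injEq] using h
  funext e
  rcases e with ⟨i, j, t⟩ | ⟨i, t⟩
  · simpa [rebalancingFlow_apply, -Finset.mem_Icc] using congrFun (congrFun (congrFun hr i) j) t
  · simpa [initialInsertion_apply, -Finset.mem_Icc] using congrFun (congrFun hs i) t

/-- The inverse of `networkEmbedding` on feasible triples. -/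
def networkFlow (T : ℕ) (xr : N → N → ℕ → ℝ) (s : N → ℕ → ℝ) : NetworkArc N T → ℝ
  | .inl (i, j, t) => xr i j t
  | .inr (i, t) => s i t

lemma rebalancingFlow_networkFlow {xr : N → N → ℕ → ℝ}
    (hxr : ∀ i j t, t ∉ Finset.Icc 1 T → xr i j t = 0) (s : N → ℕ → ℝ) :
    rebalancingFlow (networkFlow T xr s) = xr := by
  funext i j t
  rw [rebalancingFlow_apply]
  split_ifs with ht
  exacts [rfl, (hxr i j t ht).symm]

lemma initialInsertion_networkFlow (xr : N → N → ℕ → ℝ) {s : N → ℕ → ℝ}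
    (hs : ∀ i t, t ∉ Finset.Icc 1 (min 1 T) → s i t = 0) :
    initialInsertion (networkFlow T xr s) = s := by
  funext i t
  rw [initialInsertion_apply]
  split_ifs with ht
  exacts [rfl, (hs i t ht).symm]

/-- The constraint matrix of flow conservation: the incidence matrix of the time-expanded network,
restricted to the vertices within the horizon. -/
def conservationMatrix [DecidableEq N] (T : ℕ) (τ : N → N → ℕ) :
    Matrix (N × Finset.Icc 1 T) (NetworkArc N T) ℝ :=
  (incidenceMatrix ℝ arcSource (arcTarget τ)).submatrix (fun v => some (v.1, (v.2 : ℕ))) id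

lemma isTotallyUnimodular_conservationMatrix [DecidableEq N] :
    (conservationMatrix T τ).IsTotallyUnimodular :=
  isTotallyUnimodular_incidenceMatrix.submatrix _ _

variable [Fintype N]

/-- Vehicles leaving region `i` at time `t` minus vehicles arriving there at time `t`, for the
trip rates `x`. -/
def netOutflow (τ : N → N → ℕ) (x : N → N → ℕ → ℝ) (i : N) (t : ℕ) : ℝ :=
  ∑ j, x i j t - ∑ j, if τ j i < t then x j i (t - τ j i) else 0

lemma netOutflow_add (x y : N → N → ℕ → ℝ) (i : N) (t : ℕ) :
    netOutflow τ (x + y) i t = netOutflow τ x i t + netOutflow τ y i t := by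
  simp only [netOutflow, Pi.add_apply, Finset.sum_add_distrib, ite_add_zero]
  ring

lemma netOutflow_mem (S : Subring ℝ) {x : N → N → ℕ → ℝ} (hx : ∀ i j t, x i j t ∈ S)
    (i : N) (t : ℕ) : netOutflow τ x i t ∈ S := by
  refine sub_mem (sum_mem fun j _ => hx i j t) (sum_mem fun j _ => ?_)
  split_ifs
  exacts [hx _ _ _, S.zero_mem]

variable [DecidableEq N]

lemma sum_arcSource_eq (z : NetworkArc N T → ℝ) (i : N) (t : ℕ) :
    (∑ e, if arcSource e = some (i, t) then z e else 0) = ∑ j, rebalancingFlow z i j t := by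
  simp [Fintype.sum_sum_type, Fintype.sum_prod_type, arcSource, ite_and, rebalancingFlow_apply,
    sum_attach_ite_eq, -Finset.mem_Icc]

lemma sum_arcTarget_eq (z : NetworkArc N T → ℝ) (i : N) (t : ℕ) :
    (∑ e, if arcTarget τ e = some (i, t) then z e else 0) =
      (∑ j, if τ j i < t then rebalancingFlow z j i (t - τ j i) else 0) +
        initialInsertion z i t := by
  have harrival (u : Finset.Icc 1 T) (k : ℕ) : (u : ℕ) + k = t ↔ k < t ∧ (u : ℕ) = t - k := by
    have := (Finset.mem_Icc.mp u.2).1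
    omega
  simp [Fintype.sum_sum_type, Fintype.sum_prod_type, arcTarget, harrival, ite_and,
    rebalancingFlow_apply, initialInsertion_apply, sum_attach_ite_eq, -Finset.mem_Icc]

lemma conservationMatrix_mulVec (z : NetworkArc N T → ℝ) (i : N)
    (t : Finset.Icc 1 T) :
    (conservationMatrix T τ *ᵥ z) (i, t) =
      netOutflow τ (rebalancingFlow z) i t - initialInsertion z i t := by
  rw [netOutflow, sub_sub, ← sum_arcTarget_eq, ← sum_arcSource_eq]
  exact incidenceMatrix_mulVec z _

/-- The flows on the time-expanded network which, together with the customer trips, satisfy flow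
conservation. -/
def networkPolyhedron (T : ℕ) (τ : N → N → ℕ) (lam : N → N → ℕ → ℕ) : Set (NetworkArc N T → ℝ) :=
  standardPolyhedron (conservationMatrix T τ) fun v => -netOutflow τ (customerFlow T lam) v.1 v.2

lemma mem_networkPolyhedron {z : NetworkArc N T → ℝ} :
    z ∈ networkPolyhedron T τ lam ↔ 0 ≤ z ∧ ∀ i, ∀ t ∈ Finset.Icc 1 T,
      netOutflow τ (customerFlow T lam + rebalancingFlow z) i t = initialInsertion z i t := by
  refine and_congr_right' ⟨fun h i t ht => ?_, fun h => funext fun ⟨i, t⟩ => ?_⟩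
  · have := conservationMatrix_mulVec (τ := τ) z i ⟨t, ht⟩
    rw [h] at this
    rw [netOutflow_add]
    linarith
  · have := h i t t.2
    rw [netOutflow_add] at this
    rw [conservationMatrix_mulVec]
    linarith

lemma lpFeasibleSet_subset_image_networkEmbedding :
    LPFeasibleSet T τ lam ⊆ networkEmbedding T lam '' networkPolyhedron T τ lam := by
  rintro ⟨xp, xr, s⟩ ⟨-, hr_nonneg, hs_nonneg, hvanish, hs_vanish, hdemand, hflow, hs_late⟩
  have hp : customerFlow T lam = xp := by
    funext i j t
    unfold customerFlow
    split_ifs with ht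
    exacts [(hdemand i j t ht).symm, (hvanish i j t ht).1.symm]
  have hr := rebalancingFlow_networkFlow (fun i j t ht => (hvanish i j t ht).2) s
  have hs : initialInsertion (networkFlow T xr s) = s :=
    initialInsertion_networkFlow xr fun i t ht => by
      by_cases htT : t ∈ Finset.Icc 1 T
      · refine hs_late i t ?_
        simp only [Finset.mem_Icc] at ht htT
        omega
      · exact hs_vanish i t htT
  refine ⟨networkFlow T xr s, mem_networkPolyhedron.mpr ⟨?_, ?_⟩, ?_⟩
  · rintro (⟨i, j, t⟩ | ⟨i, t⟩)
    exacts [hr_nonneg i j t, hs_nonneg i t]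
  · rw [hp, hr, hs]
    exact hflow
  · rw [networkEmbedding_apply, hp, hr, hs]

lemma image_networkEmbedding_subset_lpFeasibleSet :
    networkEmbedding T lam '' networkPolyhedron T τ lam ⊆ LPFeasibleSet T τ lam := by
  rintro _ ⟨z, hz, rfl⟩
  obtain ⟨hz_nonneg, hflow⟩ := mem_networkPolyhedron.mp hz
  refine ⟨fun i j t => ?_, fun i j t => ?_, fun i t => ?_, fun i j t ht => ⟨?_, ?_⟩,
    fun i t ht => ?_, fun i j t ht => ?_, hflow, fun i t ht => ?_⟩ <;>
    simp only [networkEmbedding_apply, customerFlow, rebalancingFlow_apply, initialInsertion_apply]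
  · positivity
  · split_ifs
    exacts [hz_nonneg _, le_rfl]
  · split_ifs
    exacts [hz_nonneg _, le_rfl]
  · exact if_neg ht
  · exact dif_neg ht
  · refine dif_neg fun h => ht ?_
    simp only [Finset.mem_Icc] at h ⊢
    omega
  · exact if_pos ht
  · refine dif_neg fun h => ?_
    rw [Finset.mem_Icc] at h
    omega

theorem lpFeasibleSet_eq_image_networkEmbedding :
    LPFeasibleSet T τ lam = networkEmbedding T lam '' networkPolyhedron T τ lam :=
  lpFeasibleSet_subset_image_networkEmbedding.antisymm image_networkEmbedding_subset_lpFeasibleSet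

theorem exists_natCast_of_mem_extremePoints_networkPolyhedron {z : NetworkArc N T → ℝ}
    (hz : z ∈ (networkPolyhedron T τ lam).extremePoints ℝ) (e : NetworkArc N T) :
    ∃ n : ℕ, z e = n := by
  have hcustomer : ∀ i j t, customerFlow T lam i j t ∈ (Int.castRingHom ℝ).range := fun i j t => by
    obtain ⟨n, hn⟩ := customerFlow_eq_natCast (T := T) (lam := lam) i j t
    exact hn ▸ natCast_mem _ n
  obtain ⟨k, hk⟩ := mem_subring_of_mem_extremePoints_standardPolyhedron (Int.castRingHom ℝ).range
    (isTotallyUnimodular_conservationMatrix (T := T) (τ := τ))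
    (fun v => neg_mem (netOutflow_mem _ hcustomer v.1 v.2)) hz e
  rw [eq_intCast] at hk
  have hz_nonneg : 0 ≤ z e := hz.1.1 e
  rw [← hk, Int.cast_nonneg_iff] at hz_nonneg
  lift k to ℕ using hz_nonneg
  exact ⟨k, by exact_mod_cast hk.symm⟩

end Rebalancing

theorem lp_relaxation_extreme_points_integral_general
    {N : Type*} [Fintype N] (T : ℕ) (τ : N → N → ℕ) (lam : N → N → ℕ → ℕ)
    (p : (N → N → ℕ → ℝ) × (N → N → ℕ → ℝ) × (N → ℕ → ℝ))
    (hp : p ∈ (LPFeasibleSet T τ lam).extremePoints ℝ) :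
    (∀ i j t, ∃ n : ℕ, p.1 i j t = (n : ℝ)) ∧
    (∀ i j t, ∃ n : ℕ, p.2.1 i j t = (n : ℝ)) ∧
    (∀ i t, ∃ n : ℕ, p.2.2 i t = (n : ℝ)) := by
  classical
  rw [lpFeasibleSet_eq_image_networkEmbedding] at hp
  obtain ⟨z, hz, rfl⟩ := extremePoints_image_subset networkEmbedding_injective hp
  have hz_nat := exists_natCast_of_mem_extremePoints_networkPolyhedron hz
  refine ⟨customerFlow_eq_natCast, fun i j t => ?_, fun i t => ?_⟩
  · simp only [networkEmbedding_apply, rebalancingFlow_apply]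
    split_ifs
    exacts [hz_nat _, ⟨0, Nat.cast_zero.symm⟩]
  · simp only [networkEmbedding_apply, initialInsertion_apply]
    split_ifs
    exacts [hz_nat _, ⟨0, Nat.cast_zero.symm⟩]

/-- **Integrality of extreme points of the LP relaxation.**
Every extreme point of the LP-relaxation polytope of the offline optimal rebalancing
problem has all coordinates equal to natural numbers. -/
theorem lp_relaxation_extreme_points_integral
    {N : Type*} [Fintype N] [Nonempty N] (T : ℕ) (τ : N → N → ℕ)
    (hτ : ∀ i j, 1 ≤ τ i j) (hτdiag : ∀ i, τ i i = 1)
    (lam : N → N → ℕ → ℕ)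
    (p : (N → N → ℕ → ℝ) × (N → N → ℕ → ℝ) × (N → ℕ → ℝ))
    (hp : p ∈ (LPFeasibleSet T τ lam).extremePoints ℝ) :
    (∀ i j t, ∃ n : ℕ, p.1 i j t = (n : ℝ)) ∧
    (∀ i j t, ∃ n : ℕ, p.2.1 i j t = (n : ℝ)) ∧
    (∀ i t, ∃ n : ℕ, p.2.2 i t = (n : ℝ)) :=
  lp_relaxation_extreme_points_integral_general T τ lam p hp
end
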